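/- Let Ω ⊆ D(0, r) be open with 0 a non-isolated boundary point, Γ = ∂Ω ∩ D(0, r), and let F be holomorphic on a neighborhood of 0 and S holomorphic on Ω, continuous and bounded on Ω ∪ Γ, with S(ζ) = conj(ζ)·F(ζ) for all ζ ∈ Γ. Define f = S/F on (Ω ∪ Γ) ∩ D(0, δ) \ {0} and f(0) = 0, where δ > 0 is small enough that F has no zeros in the punctured closed disk of radius δ. Then f is a Schwarz function of Ω ∪ Γ on D(0, δ): holomorphic on Ω ∩ D(0, δ), continuous on (Ω ∪ Γ) ∩ D(0, δ), and f(ζ) = conj(ζ) on Γ ∩ D(0, δ). -/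

import Mathlib

open Complex Metric Set

local notation "conj'" => starRingEnd ℂ

open MeasureTheory Filter Topology

/-- `f` is real differentiable at `z` with Wirtinger derivatives `a = ∂f`, `b = ∂̄f`. -/
def HasW (f : ℂ → ℂ) (a b : ℂ) (z : ℂ) : Prop :=
  HasFDerivAt (𝕜 := ℝ) f
    (a • (ContinuousLinearMap.id ℝ ℂ) + b • (Complex.conjCLE : ℂ →L[ℝ] ℂ)) z

/-- the d-bar derivative -/
noncomputable def dbar (f : ℂ → ℂ) (z : ℂ) : ℂ :=
  (fderiv ℝ f z 1 + I * fderiv ℝ f z I) / 2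

lemma HasW.dbar_eq {f : ℂ → ℂ} {a b z : ℂ} (h : HasW f a b z) : dbar f z = b := by
  unfold dbar
  rw [HasFDerivAt.fderiv h]
  simp
  linear_combination (a - b) / 2 * I_mul_I

lemma hasW_of_differentiableAt {f : ℂ → ℂ} {z : ℂ} (h : DifferentiableAt ℝ f z) :
    ∃ a, HasW f a (dbar f z) z := by
  refine ⟨(fderiv ℝ f z 1 - I * fderiv ℝ f z I) / 2, ?_⟩
  unfold HasW
  refine HasFDerivAt.congr_fderiv h.hasFDerivAt ?_
  refine ContinuousLinearMap.ext fun x => ?_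
  have hx : fderiv ℝ f z x = x.re * fderiv ℝ f z 1 + x.im * fderiv ℝ f z I := by
    conv_lhs => rw [show x = x.re • (1 : ℂ) + x.im • I by simp]
    rw [map_add, map_smul, map_smul]
    simp
  have h1 : x = x.re + x.im * I := (re_add_im x).symm
  have h2 : conj' x = x.re - x.im * I := by
    apply Complex.ext <;> simp
  simp only [dbar, ContinuousLinearMap.add_apply, ContinuousLinearMap.smul_apply,
    ContinuousLinearMap.id_apply, smul_eq_mul, ContinuousLinearEquiv.coe_coe, conjCLE_apply]
  rw [hx, h2]
  conv_rhs => enter [1, 2]; rw [h1]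
  linear_combination (x.im * (fderiv ℝ f z) I) * I_mul_I

lemma HasW.mul {f g : ℂ → ℂ} {a b a' b' z : ℂ} (hf : HasW f a b z) (hg : HasW g a' b' z) :
    HasW (fun w => f w * g w) (a * g z + f z * a') (b * g z + f z * b') z := by
  unfold HasW at *
  refine HasFDerivAt.congr_fderiv (HasFDerivAt.mul hf hg) ?_
  refine ContinuousLinearMap.ext fun x => ?_
  simp
  ring

lemma HasW.add {f g : ℂ → ℂ} {a b a' b' z : ℂ} (hf : HasW f a b z) (hg : HasW g a' b' z) :
    HasW (fun w => f w + g w) (a + a') (b + b') z := by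
  unfold HasW at *
  refine HasFDerivAt.congr_fderiv (HasFDerivAt.add hf hg) ?_
  refine ContinuousLinearMap.ext fun x => ?_
  simp
  ring

lemma HasW.sub {f g : ℂ → ℂ} {a b a' b' z : ℂ} (hf : HasW f a b z) (hg : HasW g a' b' z) :
    HasW (fun w => f w - g w) (a - a') (b - b') z := by
  unfold HasW at *
  refine HasFDerivAt.congr_fderiv (HasFDerivAt.sub hf hg) ?_
  refine ContinuousLinearMap.ext fun x => ?_
  simp
  ring

lemma HasW.conj {f : ℂ → ℂ} {a b z : ℂ} (hf : HasW f a b z) :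
    HasW (fun w => conj' (f w)) (conj' b) (conj' a) z := by
  unfold HasW at *
  refine HasFDerivAt.congr_fderiv ((Complex.conjCLE : ℂ →L[ℝ] ℂ).hasFDerivAt.comp z hf) ?_
  refine ContinuousLinearMap.ext fun x => ?_
  simp
  ring

lemma hasW_of_hasDerivAt {f : ℂ → ℂ} {a z : ℂ} (hf : HasDerivAt f a z) : HasW f a 0 z := by
  unfold HasW
  have := hf.hasFDerivAt.restrictScalars ℝ
  refine HasFDerivAt.congr_fderiv this ?_
  refine ContinuousLinearMap.ext fun x => ?_
  simp [mul_comm]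

lemma hasW_conj (z : ℂ) : HasW (fun w => conj' w) 0 1 z := by
  simpa using (hasW_of_hasDerivAt (hasDerivAt_id z)).conj

lemma HasW.of_zero {f : ℂ → ℂ} {z : ℂ} (h : f =ᶠ[𝓝 z] 0) : HasW f 0 0 z := by
  unfold HasW
  have : HasFDerivAt (𝕜 := ℝ) (0 : ℂ → ℂ) 0 z := hasFDerivAt_const _ _
  refine HasFDerivAt.congr_fderiv (this.congr_of_eventuallyEq h) ?_
  refine ContinuousLinearMap.ext fun x => ?_
  simp

/-- composition of a real function with `|f|²` -/
lemma HasW.comp_normSq {f : ℂ → ℂ} {a b z : ℂ} (hf : HasW f a b z) {m : ℝ → ℝ} {m' : ℝ}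
    (hm : HasDerivAt m m' (normSq (f z))) :
    HasW (fun w => ((m (normSq (f w)) : ℝ) : ℂ))
      (m' * (a * conj' (f z) + f z * conj' b)) (m' * (b * conj' (f z) + f z * conj' a)) z := by
  have h1 := hf.mul hf.conj
  unfold HasW at *
  have h2 : HasFDerivAt (𝕜 := ℝ) (fun w => normSq (f w)) _ z :=
    ((Complex.reCLM.hasFDerivAt (x := f z * conj' (f z))).comp z h1).congr_of_eventuallyEq
      (Eventually.of_forall fun w => by simp [mul_conj])
  have h3 := Complex.ofRealCLM.hasFDerivAt.comp z (hm.comp_hasFDerivAt z h2)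
  refine HasFDerivAt.congr_fderiv h3 ?_
  refine ContinuousLinearMap.ext fun x => ?_
  apply Complex.ext <;> simp <;> ring

lemma integral_fderiv_zero {X : ℂ → ℂ} (hX : ContDiff ℝ 1 X) (hc : HasCompactSupport X) (v : ℂ) :
    ∫ z, fderiv ℝ X z v = 0 := by
  have hcont : Continuous fun z => fderiv ℝ X z v :=
    (hX.continuous_fderiv (by norm_num)).clm_apply continuous_const
  have hcs : HasCompactSupport fun z => fderiv ℝ X z v := hc.fderiv_apply ℝ v
  have := integral_mul_fderiv_eq_neg_fderiv_mul_of_integrable (μ := (volume : Measure ℂ))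
    (f := fun _ : ℂ => (1 : ℂ)) (g := X) (v := v) (by simp)
    (by simpa using hcont.integrable_of_hasCompactSupport hcs)
    (by simpa using hX.continuous.integrable_of_hasCompactSupport hc)
    (fun x _ => by fun_prop) (fun x _ => (hX.differentiable (by norm_num)) x)
  simpa using this

lemma continuous_dbar {X : ℂ → ℂ} (hX : ContDiff ℝ 1 X) : Continuous (dbar X) := by
  have hcont (v : ℂ) : Continuous fun z => fderiv ℝ X z v :=
    (hX.continuous_fderiv (by norm_num)).clm_apply continuous_const
  unfold dbar
  have := hcont 1
  have := hcont I
  fun_prop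

lemma hasCompactSupport_dbar {X : ℂ → ℂ} (hc : HasCompactSupport X) :
    HasCompactSupport (dbar X) := by
  refine hc.mono' ?_
  intro z hz
  by_contra h
  apply hz
  have : X =ᶠ[𝓝 z] 0 := notMem_tsupport_iff_eventuallyEq.mp h
  exact (HasW.of_zero this).dbar_eq

lemma integral_dbar {X : ℂ → ℂ} (hX : ContDiff ℝ 1 X) (hc : HasCompactSupport X) :
    ∫ z, dbar X z = 0 := by
  have hcont (v : ℂ) : Integrable fun z => fderiv ℝ X z v :=
    ((hX.continuous_fderiv (by norm_num)).clm_apply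
      continuous_const).integrable_of_hasCompactSupport (hc.fderiv_apply ℝ v)
  unfold dbar
  rw [integral_div, integral_add (hcont 1) ((hcont I).const_mul I), integral_const_mul,
    integral_fderiv_zero hX hc, integral_fderiv_zero hX hc]
  simp

/-- the cutoff -/
lemma exists_cutoff : ∃ m m' : ℝ → ℝ, ∃ M : ℝ, ContDiff ℝ 1 m ∧ (∀ t, HasDerivAt m (m' t) t) ∧
    (∀ t ≤ 1, m t = 0) ∧ (∀ t < 1, m' t = 0) ∧ (∀ t, 0 ≤ m t) ∧ (∀ t, m t ≤ 1) ∧ (∀ t, 0 ≤ m' t) ∧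
    (∀ t, 2 < t → m t = 1) ∧ (∀ t, 2 < t → m' t = 0) ∧ (∀ t, |t * m' t| ≤ M) := by
  set m : ℝ → ℝ := fun t => Real.smoothTransition (t - 1) with hm
  have hmC : ContDiff ℝ 1 m := by
    exact (Real.smoothTransition.contDiff (n := 1)).comp (by fun_prop)
  have hz : ∀ t < 1, deriv m t = 0 := by
    intro t ht
    have : m =ᶠ[𝓝 t] fun _ => 0 := by
      filter_upwards [Iio_mem_nhds ht] with x hx
      exact Real.smoothTransition.zero_of_nonpos (by simp at hx; linarith)
    rw [this.deriv_eq]; simp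
  have h2 : ∀ t, 2 < t → deriv m t = 0 := by
    intro t ht
    have : m =ᶠ[𝓝 t] fun _ => 1 := by
      filter_upwards [Ioi_mem_nhds ht] with x hx
      exact Real.smoothTransition.one_of_one_le (by simp at hx; linarith)
    rw [this.deriv_eq]; simp
  have hcont : Continuous (deriv m) := hmC.continuous_deriv (by norm_num)
  have hb : ∃ M, ∀ t, ‖t * deriv m t‖ ≤ M := by
    have hcs : HasCompactSupport (fun t => t * deriv m t) := by
      refine HasCompactSupport.of_support_subset_isCompact (isCompact_Icc (a := (1:ℝ)) (b := 2)) ?_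
      intro t ht
      constructor
      · by_contra h; apply ht; simp [hz t (by linarith)]
      · by_contra h; apply ht; simp [h2 t (by linarith)]
    exact hcs.exists_bound_of_continuous (by fun_prop)
  obtain ⟨M, hM⟩ := hb
  refine ⟨m, deriv m, M, hmC, fun t => ?_, fun t ht => ?_, hz, fun t => ?_, fun t => ?_,
    fun t => ?_, fun t ht => ?_, h2, hM⟩
  · exact (hmC.differentiable (by norm_num) t).hasDerivAt
  · exact Real.smoothTransition.zero_of_nonpos (by linarith)
  · exact Real.smoothTransition.nonneg _
  · exact Real.smoothTransition.le_one _
  · apply Monotone.deriv_nonneg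
    exact Real.smoothTransition.monotone.comp (fun a b h => by simpa using h)
  · exact Real.smoothTransition.one_of_one_le (by linarith)

/-- the defect function `W = s - z̄ zⁿ` -/
def defect (n : ℕ) (s : ℂ → ℂ) (z : ℂ) : ℂ := s z - conj' z * z ^ n

/-- its `∂`-derivative -/
noncomputable def pdefect (n : ℕ) (s : ℂ → ℂ) (z : ℂ) : ℂ := deriv s z - conj' z * (n * z ^ (n - 1))

lemma continuous_defect {n : ℕ} {s : ℂ → ℂ} (hs : Continuous s) : Continuous (defect n s) := by
  unfold defect
  have : Continuous fun z : ℂ => conj' z := continuous_conj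
  fun_prop

lemma analyticAt_of_defect {n : ℕ} {s : ℂ → ℂ} {δ : ℝ} (hs : Continuous s)
    (hd : ∀ z ∈ ball (0 : ℂ) δ, defect n s z ≠ 0 → DifferentiableAt ℂ s z)
    {z : ℂ} (hz : z ∈ ball (0 : ℂ) δ) (hW : defect n s z ≠ 0) : AnalyticAt ℂ s z := by
  rw [Complex.analyticAt_iff_eventually_differentiableAt]
  filter_upwards [isOpen_ball.mem_nhds hz, (continuous_defect hs).continuousAt.eventually_ne hW]
    with w h1 h2 using hd w h1 h2

lemma hasW_defect {n : ℕ} {s : ℂ → ℂ} {z : ℂ} (h : DifferentiableAt ℂ s z) :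
    HasW (defect n s) (pdefect n s z) (-(z ^ n)) z := by
  have := (hasW_of_hasDerivAt h.hasDerivAt).sub
    ((hasW_conj z).mul (hasW_of_hasDerivAt (hasDerivAt_pow n z)))
  simp only [zero_mul, zero_add, mul_zero, add_zero, one_mul, zero_sub] at this
  exact this

lemma hasW_pdefect {n : ℕ} {s : ℂ → ℂ} {z : ℂ} (h : AnalyticAt ℂ s z) :
    ∃ a, HasW (pdefect n s) a (-(n * z ^ (n - 1))) z := by
  have h1 : DifferentiableAt ℂ (fun w : ℂ => (n : ℂ) * w ^ (n - 1)) z := by fun_prop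
  have := (hasW_of_hasDerivAt h.deriv.differentiableAt.hasDerivAt).sub
    ((hasW_conj z).mul (hasW_of_hasDerivAt h1.hasDerivAt))
  simp only [zero_mul, zero_add, mul_zero, add_zero, one_mul, zero_sub] at this
  exact ⟨_, this⟩

lemma contDiff_conj' {N : WithTop ℕ∞} : ContDiff ℝ N (fun z : ℂ => conj' z) :=
  (Complex.conjCLE : ℂ →L[ℝ] ℂ).contDiff

lemma contDiffAt_defect {n : ℕ} {s : ℂ → ℂ} {z : ℂ} (h : AnalyticAt ℂ s z) :
    ContDiffAt ℝ 1 (defect n s) z := by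
  have h1 : ContDiffAt ℝ 1 s z := (h.contDiffAt (n := 1)).restrict_scalars ℝ
  have h2 : ContDiffAt ℝ 1 (fun z : ℂ => conj' z) z := contDiff_conj'.contDiffAt
  unfold defect
  fun_prop

lemma contDiffAt_pdefect {n : ℕ} {s : ℂ → ℂ} {z : ℂ} (h : AnalyticAt ℂ s z) :
    ContDiffAt ℝ 1 (pdefect n s) z := by
  have h1 : ContDiffAt ℝ 1 (deriv s) z := (h.deriv.contDiffAt (n := 1)).restrict_scalars ℝ
  have h2 : ContDiffAt ℝ 1 (fun z : ℂ => conj' z) z := contDiff_conj'.contDiffAt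
  unfold pdefect
  fun_prop

/-- truncated test field -/
def truncX (n : ℕ) (s : ℂ → ℂ) (m : ℝ → ℝ) (k : ℝ) (Φ Y : ℂ → ℂ) (z : ℂ) : ℂ :=
  Φ z * (((m (k * normSq (defect n s z)) : ℝ) : ℂ) * Y z)

lemma trunc_main {n : ℕ} {s : ℂ → ℂ} {δ : ℝ} (hs : Continuous s)
    (hd : ∀ z ∈ ball (0 : ℂ) δ, defect n s z ≠ 0 → DifferentiableAt ℂ s z)
    {m m' : ℝ → ℝ} (hmC : ContDiff ℝ 1 m) (hmd : ∀ t, HasDerivAt m (m' t) t)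
    (hm0 : ∀ t ≤ 1, m t = 0) (k : ℝ)
    {Φ Y : ℂ → ℂ} (hΦ : ContDiff ℝ 1 Φ) (hΦc : HasCompactSupport Φ)
    (hΦs : tsupport Φ ⊆ ball 0 δ)
    (hY : ∀ z ∈ ball (0 : ℂ) δ, defect n s z ≠ 0 → ContDiffAt ℝ 1 Y z) :
    ContDiff ℝ 1 (truncX n s m k Φ Y) ∧ HasCompactSupport (truncX n s m k Φ Y) ∧
    ∀ z, dbar (truncX n s m k Φ Y) z =
      dbar Φ z * ((m (k * normSq (defect n s z)) : ℝ) * Y z) +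
      Φ z * ((m' (k * normSq (defect n s z)) * k : ℝ) *
        (-(z ^ n) * conj' (defect n s z) + defect n s z * conj' (pdefect n s z)) * Y z
        + (m (k * normSq (defect n s z)) : ℝ) * dbar Y z) := by
  have hWc := continuous_defect (n := n) hs
  have key : ∀ z, truncX n s m k Φ Y =ᶠ[𝓝 z] 0 ∨ (z ∈ ball (0 : ℂ) δ ∧ defect n s z ≠ 0) := by
    intro z
    by_cases hz : z ∈ tsupport Φ
    · by_cases hW : defect n s z = 0
      · left
        have : ∀ᶠ w in 𝓝 z, k * normSq (defect n s w) < 1 := by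
          have hc : Continuous fun w => k * normSq (defect n s w) :=
            continuous_const.mul (continuous_normSq.comp hWc)
          exact hc.continuousAt.eventually_lt continuousAt_const (by simp [hW])
        filter_upwards [this] with w hw
        simp [truncX, hm0 _ hw.le]
      · exact Or.inr ⟨hΦs hz, hW⟩
    · left
      filter_upwards [notMem_tsupport_iff_eventuallyEq.mp hz] with w hw
      simp [truncX, hw]
  refine ⟨?_, ?_, ?_⟩
  · rw [contDiff_iff_contDiffAt]
    intro z
    rcases key z with h | ⟨h1, h2⟩
    · exact contDiffAt_const.congr_of_eventuallyEq h
    · have hA := contDiffAt_defect (n := n) (analyticAt_of_defect hs hd h1 h2)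
      have hYz := hY z h1 h2
      have hn : ContDiffAt ℝ 1 (fun w => normSq (defect n s w)) z := by
        have : (fun w => normSq (defect n s w)) = fun w => ‖defect n s w‖ ^ 2 := by
          funext w; rw [normSq_eq_norm_sq]
        rw [this]
        exact hA.norm_sq ℝ
      have hmm : ContDiffAt ℝ 1 (fun w => m (k * normSq (defect n s w))) z :=
        hmC.contDiffAt.comp z (contDiffAt_const.mul hn)
      have hmm' : ContDiffAt ℝ 1 (fun w => ((m (k * normSq (defect n s w)) : ℝ) : ℂ)) z :=
        Complex.ofRealCLM.contDiff.contDiffAt.comp z hmm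
      exact hΦ.contDiffAt.mul (hmm'.mul hYz)
  · exact hΦc.mul_right
  · intro z
    by_cases hz : z ∈ tsupport Φ
    · by_cases hW : defect n s z = 0
      · have h : truncX n s m k Φ Y =ᶠ[𝓝 z] 0 := by
          rcases key z with h | h
          · exact h
          · exact absurd hW h.2
        rw [(HasW.of_zero h).dbar_eq]
        simp [hW, hm0 0 (by norm_num)]
      · have h1 := hΦs hz
        obtain ⟨a1, hΦW⟩ := hasW_of_differentiableAt (hΦ.differentiable (by norm_num) z)
        obtain ⟨a2, hYW⟩ := hasW_of_differentiableAt ((hY z h1 hW).differentiableAt (by norm_num))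
        have hWW := hasW_defect (n := n) (hd z h1 hW)
        have hmk : HasDerivAt (fun t => m (k * t)) (m' (k * normSq (defect n s z)) * k)
            (normSq (defect n s z)) := by
          have := (hmd (k * normSq (defect n s z))).comp (normSq (defect n s z))
            ((hasDerivAt_id (normSq (defect n s z))).const_mul k)
          simpa [Function.comp_def] using this
        have hmW := hWW.comp_normSq hmk
        have := (hΦW.mul (hmW.mul hYW)).dbar_eq
        exact this
    · have hΦ0 := notMem_tsupport_iff_eventuallyEq.mp hz
      have h : truncX n s m k Φ Y =ᶠ[𝓝 z] 0 := by
        filter_upwards [hΦ0] with w hw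
        simp [truncX, hw]
      rw [(HasW.of_zero h).dbar_eq, (HasW.of_zero hΦ0).dbar_eq, hΦ0.self_of_nhds]
      simp

lemma measurable_pdefect (n : ℕ) (s : ℂ → ℂ) : Measurable (pdefect n s) := by
  unfold pdefect
  have h1 : Measurable (deriv s) := measurable_deriv s
  have h2 : Measurable fun z : ℂ => conj' z := continuous_conj.measurable
  fun_prop

lemma energy_pointwise {ψ m β x w d Q Q' M : ℝ} (hm : 0 ≤ m) (hm1 : m ≤ 1)
    (hβ : 0 ≤ β) (hβw : β * w ^ 2 ≤ M) (hw : 0 ≤ w) (hQ' : 0 ≤ Q') {r1 r2 r3 : ℝ}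
    (h1 : |r1| ≤ 2 * ψ * d * m * w * x) (h2 : |r2| ≤ Q * w ^ 2 * x) (h3 : |r3| ≤ w * Q') :
    1 / 2 * (ψ ^ 2 * m * x ^ 2) ≤
      (r1 + ψ ^ 2 * (β * (-r2 + w ^ 2 * x ^ 2) + m * (x ^ 2 - r3))) +
        (2 * d ^ 2 * w ^ 2 + ψ ^ 2 * w * Q' + ψ ^ 2 * M * Q ^ 2) := by
  have a1 : -(m * (1 / 2 * ψ ^ 2 * x ^ 2 + 2 * d ^ 2 * w ^ 2)) ≤ r1 := by
    have : 2 * ψ * d * m * w * x ≤ m * (1 / 2 * ψ ^ 2 * x ^ 2 + 2 * d ^ 2 * w ^ 2) := by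
      nlinarith [mul_nonneg hm (sq_nonneg (ψ * x - 2 * d * w))]
    linarith [neg_abs_le r1]
  have a2 : -(ψ ^ 2 * (β * w ^ 2) * (x ^ 2 + Q ^ 2)) ≤ ψ ^ 2 * β * (-r2) := by
    have hh : r2 ≤ w ^ 2 * (x ^ 2 + Q ^ 2) := by
      have := le_abs_self r2
      nlinarith [mul_nonneg (sq_nonneg w) (sq_nonneg (x - Q)), mul_nonneg (sq_nonneg w) (sq_nonneg x),
        mul_nonneg (sq_nonneg w) (sq_nonneg Q)]
    nlinarith [mul_le_mul_of_nonneg_left hh (mul_nonneg (sq_nonneg ψ) hβ)]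
  have a3 : ψ ^ 2 * (β * w ^ 2) * Q ^ 2 ≤ ψ ^ 2 * M * Q ^ 2 := by gcongr
  have a4 : ψ ^ 2 * m * r3 ≤ ψ ^ 2 * w * Q' := by
    have : r3 ≤ w * Q' := (le_abs_self _).trans h3
    have h5 : m * r3 ≤ w * Q' := by
      calc m * r3 ≤ m * (w * Q') := by gcongr
        _ ≤ 1 * (w * Q') := by gcongr
        _ = _ := one_mul _
    nlinarith [mul_le_mul_of_nonneg_left h5 (sq_nonneg ψ)]
  have a5 : m * (2 * d ^ 2 * w ^ 2) ≤ 2 * d ^ 2 * w ^ 2 := by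
    have : 0 ≤ 2 * d ^ 2 * w ^ 2 := by positivity
    nlinarith
  nlinarith

lemma energy {n : ℕ} {s : ℂ → ℂ} {δ : ℝ} (hs : Continuous s)
    (hd : ∀ z ∈ ball (0 : ℂ) δ, defect n s z ≠ 0 → DifferentiableAt ℂ s z)
    {ρ : ℝ} (hρ : 0 < ρ) (hρδ : ρ < δ) :
    IntegrableOn (pdefect n s) (closedBall 0 ρ ∩ {z | defect n s z ≠ 0}) := by
  obtain ⟨m, m', M, hmC, hmd, hm0, hm0', hmn, hm1, hmn', hm2, hm2', hM⟩ := exists_cutoff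
  have hWc := continuous_defect (n := n) hs
  let b : ContDiffBump (0 : ℂ) := ⟨ρ, (ρ + δ) / 2, hρ, by linarith⟩
  set ψ : ℂ → ℂ := fun z => ((b z : ℝ) : ℂ) with hψ
  have hψC : ContDiff ℝ 1 ψ := Complex.ofRealCLM.contDiff.comp b.contDiff
  have hsub : tsupport (fun z => ψ z * ψ z) ⊆ ball (0 : ℂ) δ := by
    have h1 : tsupport (fun z => ψ z * ψ z) ⊆ tsupport b := by
      apply closure_mono
      intro z hz h
      apply hz
      simp only [hψ]
      rw [h]; simp
    refine h1.trans ?_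
    rw [b.tsupport_eq]
    exact closedBall_subset_ball (show (ρ + δ) / 2 < δ by linarith)
  have hψcs : HasCompactSupport ψ := by
    refine b.hasCompactSupport.mono ?_
    intro z hz h
    apply hz
    simp only [hψ]
    rw [h]; simp
  have hcs : HasCompactSupport (fun z => ψ z * ψ z) := hψcs.mul_right
  set Y : ℂ → ℂ := fun z => conj' (defect n s z) * pdefect n s z with hYdef
  have hYd : ∀ z ∈ ball (0 : ℂ) δ, defect n s z ≠ 0 → ContDiffAt ℝ 1 Y z := by
    intro z h1 h2
    have hA := analyticAt_of_defect hs hd h1 h2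
    exact (contDiff_conj'.contDiffAt.comp z (contDiffAt_defect hA)).mul (contDiffAt_pdefect hA)
  have hYdbar : ∀ z ∈ ball (0 : ℂ) δ, defect n s z ≠ 0 → dbar Y z =
      conj' (pdefect n s z) * pdefect n s z + conj' (defect n s z) * (-(n * z ^ (n - 1))) := by
    intro z h1 h2
    have hA := analyticAt_of_defect hs hd h1 h2
    obtain ⟨a, ha⟩ := hasW_pdefect (n := n) hA
    exact ((hasW_defect hA.differentiableAt).conj.mul ha).dbar_eq
  set G : ℂ → ℝ := fun z => 2 * ‖dbar ψ z‖ ^ 2 * ‖defect n s z‖ ^ 2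
    + (b z) ^ 2 * ‖defect n s z‖ * ‖(n * z ^ (n - 1) : ℂ)‖ + (b z) ^ 2 * M * ‖z ^ n‖ ^ 2 with hG
  have hM0 : 0 ≤ M := (abs_nonneg _).trans (hM 0)
  have hG0 : ∀ z, 0 ≤ G z := fun z => by positivity
  have hGi : Integrable G := by
    have hc1 := continuous_dbar hψC
    have hc2 : Continuous b := b.continuous
    refine Continuous.integrable_of_hasCompactSupport ?_ ?_
    · fun_prop
    · have i1 : HasCompactSupport (fun z => ‖dbar ψ z‖ ^ 2) :=
        (hasCompactSupport_dbar hψcs).comp_left (g := fun z => ‖z‖ ^ 2) (by simp)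
      have i2 : HasCompactSupport (fun z => (b z) ^ 2) :=
        b.hasCompactSupport.comp_left (g := fun z => z ^ 2) (by simp)
      have := ((i1.mul_left (f := fun _ => (2:ℝ))).mul_right (f' := fun z => ‖defect n s z‖ ^ 2)).add
        ((i2.mul_right (f' := fun z => ‖defect n s z‖)).mul_right
          (f' := fun z => ‖(n * z ^ (n - 1) : ℂ)‖))
      exact this.add ((i2.mul_right (f' := fun _ => M)).mul_right (f' := fun z => ‖z ^ n‖ ^ 2))
  have hψdbar : ∀ z, dbar (fun z => ψ z * ψ z) z = dbar ψ z * ψ z + ψ z * dbar ψ z := by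
    intro z
    obtain ⟨a, ha⟩ := hasW_of_differentiableAt (hψC.differentiable (by norm_num) z)
    exact (ha.mul ha).dbar_eq
  have main : ∀ k : ℕ, ∫⁻ z, ENNReal.ofReal
      (1 / 2 * ((b z) ^ 2 * m (k * normSq (defect n s z)) * ‖pdefect n s z‖ ^ 2))
      ≤ ENNReal.ofReal (∫ z, G z) := by
    intro k
    obtain ⟨hX1, hX2, hX3⟩ := trunc_main hs hd hmC hmd hm0 (k : ℝ) (hψC.mul hψC) hcs hsub hYd
    set X := truncX n s m k (fun z => ψ z * ψ z) Y with hX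
    have hXi : Integrable (dbar X) :=
      (continuous_dbar hX1).integrable_of_hasCompactSupport (hasCompactSupport_dbar hX2)
    have hXz : ∫ z, (dbar X z).re = 0 := by
      have := Complex.reCLM.integral_comp_comm hXi
      simp only [Complex.reCLM_apply] at this
      rw [this, integral_dbar hX1 hX2]; simp
    have hpt : ∀ z, 1 / 2 * ((b z) ^ 2 * m (k * normSq (defect n s z)) * ‖pdefect n s z‖ ^ 2)
        ≤ (dbar X z).re + G z := by
      intro z
      by_cases hz : z ∈ tsupport (fun z => ψ z * ψ z)
      · by_cases hW : defect n s z = 0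
        · have : dbar X z = 0 := by
            rw [hX3]; simp [hW, hm0 0 (by norm_num)]
          rw [this]
          simpa [hW, hm0 0 (by norm_num)] using hG0 z
        · have hzb := hsub hz
          have e := hX3 z
          rw [hψdbar, hYdbar z hzb hW] at e
          set P := pdefect n s z
          set D := dbar ψ z
          set V := defect n s z
          set μ := m (k * normSq V)
          have hm'b : m' (k * normSq V) * k * ‖V‖ ^ 2 ≤ M := by
            have := (le_abs_self _).trans (hM (k * normSq V))
            rw [← normSq_eq_norm_sq]
            linarith
          have hre : (dbar X z).re = (2 * ψ z * D * μ * (conj' V * P)).re +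
              (b z) ^ 2 * (m' (k * normSq V) * k * (-(z ^ n * conj' V ^ 2 * P).re
                + ‖V‖ ^ 2 * ‖P‖ ^ 2) + μ * (‖P‖ ^ 2 - (conj' V * (n * z ^ (n - 1))).re)) := by
            have e2 : dbar X z = (2 * ψ z * D * μ * (conj' V * P)) +
              (((b z) ^ 2 : ℝ) : ℂ) * ((m' (k * normSq V) * k : ℝ) * (-(z ^ n * conj' V ^ 2 * P)
                + ((‖V‖ ^ 2 * ‖P‖ ^ 2 : ℝ) : ℂ)) +
                (μ : ℂ) * (((‖P‖ ^ 2 : ℝ) : ℂ) - (conj' V * (n * z ^ (n - 1))))) := by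
              rw [e]
              have hV2 : ((‖V‖ ^ 2 : ℝ) : ℂ) = V * conj' V := by
                rw [mul_conj, normSq_eq_norm_sq]
              have hP2 : ((‖P‖ ^ 2 : ℝ) : ℂ) = P * conj' P := by
                rw [mul_conj, normSq_eq_norm_sq]
              have hb2 : (((b z) ^ 2 : ℝ) : ℂ) = ψ z * ψ z := by
                simp [hψ, sq]
              rw [ofReal_mul (‖V‖ ^ 2), hV2, hP2, hb2]
              simp only [hYdef]
              ring
            rw [e2, add_re, re_ofReal_mul, add_re, re_ofReal_mul, re_ofReal_mul, add_re, sub_re,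
              neg_re, ofReal_re, ofReal_re]
          rw [hre]
          have hμ0 : 0 ≤ μ := hmn _
          have hbz : 0 ≤ b z := b.nonneg
          apply energy_pointwise hμ0 (hm1 _) (mul_nonneg (hmn' _) (Nat.cast_nonneg k)) hm'b
            (norm_nonneg _) (norm_nonneg _)
          · refine (abs_re_le_norm _).trans (le_of_eq ?_)
            simp [hψ, abs_of_nonneg hμ0, abs_of_nonneg hbz]
            ring
          · refine (abs_re_le_norm _).trans (le_of_eq ?_)
            simp
          · refine (abs_re_le_norm _).trans (le_of_eq ?_)
            simp
      · have h0 := notMem_tsupport_iff_eventuallyEq.mp hz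
        have h1 : ψ z * ψ z = 0 := h0.self_of_nhds
        have : dbar X z = 0 := by
          rw [hX3, (HasW.of_zero h0).dbar_eq, h1]; simp
        rw [this]
        have hbz : b z = 0 := by simpa [hψ] using h1
        simpa [hbz] using hG0 z
    have hnn : ∀ z, 0 ≤ (dbar X z).re + G z := by
      intro z
      refine le_trans ?_ (hpt z)
      have := hmn (k * normSq (defect n s z))
      positivity
    calc _ ≤ ∫⁻ z, ENNReal.ofReal ((dbar X z).re + G z) :=
          lintegral_mono fun z => ENNReal.ofReal_le_ofReal (hpt z)
      _ = ENNReal.ofReal (∫ z, ((dbar X z).re + G z)) :=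
          (ofReal_integral_eq_lintegral_ofReal (hXi.re.add hGi) (Eventually.of_forall hnn)).symm
      _ = _ := by
          rw [integral_add (by exact hXi.re) hGi, hXz, zero_add]
  -- Fatou
  have hpm := measurable_pdefect n s
  have hmeas : MeasurableSet (closedBall 0 ρ ∩ {z | defect n s z ≠ 0}) :=
    measurableSet_closedBall.inter (hWc.measurable (measurableSet_singleton 0).compl)
  set A := closedBall 0 ρ ∩ {z | defect n s z ≠ 0} with hA
  have hfat : ∫⁻ z in A, ENNReal.ofReal (1 / 2 * ‖pdefect n s z‖ ^ 2) ≤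
      ENNReal.ofReal (∫ z, G z) := by
    calc ∫⁻ z in A, ENNReal.ofReal (1 / 2 * ‖pdefect n s z‖ ^ 2)
        ≤ ∫⁻ z in A, liminf (fun k : ℕ => ENNReal.ofReal
      (1 / 2 * ((b z) ^ 2 * m (k * normSq (defect n s z)) * ‖pdefect n s z‖ ^ 2))) atTop := by
          refine setLIntegral_mono' hmeas ?_
          intro z hz
          have hb1 : b z = 1 := b.one_of_mem_closedBall hz.1
          have hpos : 0 < normSq (defect n s z) := normSq_pos.mpr hz.2
          refine le_of_eq (Tendsto.liminf_eq ?_).symm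
          refine tendsto_const_nhds.congr' ?_
          have : Tendsto (fun k : ℕ => (k : ℝ) * normSq (defect n s z)) atTop atTop :=
            tendsto_natCast_atTop_atTop.atTop_mul_const hpos
          filter_upwards [this.eventually_gt_atTop 2] with k hk
          rw [hm2 _ hk, hb1]; simp
      _ ≤ ∫⁻ z, liminf (fun k : ℕ => ENNReal.ofReal
      (1 / 2 * ((b z) ^ 2 * m (k * normSq (defect n s z)) * ‖pdefect n s z‖ ^ 2))) atTop :=
          setLIntegral_le_lintegral _ _
      _ ≤ liminf (fun k : ℕ => ∫⁻ z, ENNReal.ofReal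
      (1 / 2 * ((b z) ^ 2 * m (k * normSq (defect n s z)) * ‖pdefect n s z‖ ^ 2))) atTop := by
          apply lintegral_liminf_le
          intro k
          have h1 : Measurable b := b.continuous.measurable
          have h2 : Measurable fun z => m (k * normSq (defect n s z)) :=
            (hmC.continuous.comp (continuous_const.mul (continuous_normSq.comp hWc))).measurable
          exact ENNReal.measurable_ofReal.comp
            ((((h1.pow_const 2).mul h2).mul (hpm.norm.pow_const 2)).const_mul (1 / 2))
      _ ≤ _ := by
          refine (liminf_le_liminf (Eventually.of_forall main)).trans ?_
          simp
  have hfin : volume A < ⊤ :=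
    (measure_mono inter_subset_left).trans_lt measure_closedBall_lt_top
  have hL2 : IntegrableOn (fun z => 1 / 2 * ‖pdefect n s z‖ ^ 2) A := by
    refine ⟨by fun_prop, ?_⟩
    rw [hasFiniteIntegral_iff_ofReal (Eventually.of_forall fun z => by positivity)]
    exact hfat.trans_lt ENNReal.ofReal_lt_top
  have hone : IntegrableOn (fun _ : ℂ => (1 : ℝ)) A := integrableOn_const hfin.ne
  refine Integrable.mono' (hL2.add hone) (by fun_prop) (Eventually.of_forall fun z => ?_)
  simp only [Pi.add_apply]
  nlinarith [sq_nonneg (‖pdefect n s z‖ - 1)]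

lemma weak_dbar {n : ℕ} {s : ℂ → ℂ} {δ : ℝ} (hs : Continuous s)
    (hd : ∀ z ∈ ball (0 : ℂ) δ, defect n s z ≠ 0 → DifferentiableAt ℂ s z)
    {ρ : ℝ} (hρ : 0 < ρ) (hρδ : ρ < δ) {Φ : ℂ → ℂ} (hΦ : ContDiff ℝ 1 Φ)
    (hΦc : HasCompactSupport Φ) (hΦs : tsupport Φ ⊆ closedBall 0 ρ) :
    ∫ z, (dbar Φ z * s z + {z | defect n s z = 0}.indicator (fun z => z ^ n) z * Φ z) = 0 := by
  obtain ⟨m, m', M, hmC, hmd, hm0, hm0', hmn, hm1, hmn', hm2, hm2', hM⟩ := exists_cutoff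
  have hM0 : 0 ≤ M := (abs_nonneg _).trans (hM 0)
  have hWc := continuous_defect (n := n) hs
  have hE := energy hs hd hρ hρδ
  have hmeas : MeasurableSet (closedBall 0 ρ ∩ {z | defect n s z ≠ 0}) :=
    measurableSet_closedBall.inter (hWc.measurable (measurableSet_singleton 0).compl)
  set A := closedBall 0 ρ ∩ {z | defect n s z ≠ 0} with hA
  have hΦs' : tsupport Φ ⊆ ball 0 δ := hΦs.trans (closedBall_subset_ball hρδ)
  have hYd : ∀ z ∈ ball (0 : ℂ) δ, defect n s z ≠ 0 → ContDiffAt ℝ 1 (defect n s) z :=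
    fun z h1 h2 => contDiffAt_defect (analyticAt_of_defect hs hd h1 h2)
  have htr := fun k : ℕ => trunc_main hs hd hmC hmd hm0 (k : ℝ) hΦ hΦc hΦs' hYd
  set X := fun k : ℕ => truncX n s m k Φ (defect n s) with hX
  set Lf : ℂ → ℂ := fun z => dbar Φ z * defect n s z -
    {z | defect n s z ≠ 0}.indicator (fun z => z ^ n) z * Φ z with hL
  obtain ⟨C, hC⟩ := hΦc.exists_bound_of_continuous hΦ.continuous
  have hC0 : 0 ≤ C := (norm_nonneg _).trans (hC 0)
  set g : ℂ → ℝ := fun z => ‖dbar Φ z * defect n s z‖ + (M + 1) * ‖Φ z * z ^ n‖ +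
    C * M * A.indicator (fun z => ‖pdefect n s z‖) z with hg
  have hdΦ := continuous_dbar hΦ
  have hdΦc := hasCompactSupport_dbar hΦc
  have i1 : Integrable (fun z => dbar Φ z * defect n s z) :=
    (hdΦ.mul hWc).integrable_of_hasCompactSupport hdΦc.mul_right
  have i2 : Integrable (fun z => Φ z * z ^ n) :=
    (hΦ.continuous.mul (continuous_pow n)).integrable_of_hasCompactSupport hΦc.mul_right
  have hgi : Integrable g := by
    refine (i1.norm.add (i2.norm.const_mul (M + 1))).add (Integrable.const_mul ?_ (C * M))
    exact (integrable_indicator_iff hmeas).mpr hE.norm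
  have hlim : Tendsto (fun k => ∫ z, dbar (X k) z) atTop (𝓝 (∫ z, Lf z)) := by
    refine tendsto_integral_of_dominated_convergence g ?_ hgi ?_ ?_
    · exact fun k => (continuous_dbar (htr k).1).aestronglyMeasurable
    · intro k
      refine Eventually.of_forall fun z => ?_
      have hind : 0 ≤ A.indicator (fun z => ‖pdefect n s z‖) z :=
        indicator_nonneg (fun _ _ => norm_nonneg _) z
      have hg0 : 0 ≤ g z := by positivity
      by_cases hz : z ∈ tsupport Φ
      · by_cases hW : defect n s z = 0
        · have : dbar (X k) z = 0 := by
            rw [(htr k).2.2]; simp [hW, hm0 0 (by norm_num)]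
          rw [this]; simpa using hg0
        · have hdW := (hasW_defect (n := n) (hd z (hΦs' hz) hW)).dbar_eq
          rw [(htr k).2.2 z, hdW]
          have hAz : z ∈ A := ⟨hΦs hz, hW⟩
          simp only [hg, indicator_of_mem hAz]
          set V := defect n s z
          set P := pdefect n s z
          set μ := m (k * normSq V)
          have hμ0 : 0 ≤ μ := hmn _
          have hμ1 : μ ≤ 1 := hm1 _
          set β := m' (k * normSq V) * k
          have hβ0 : 0 ≤ β := mul_nonneg (hmn' _) (Nat.cast_nonneg k)
          have hm'b : β * ‖V‖ ^ 2 ≤ M := by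
            have := (le_abs_self _).trans (hM (k * normSq V))
            rw [← normSq_eq_norm_sq]
            simp only [β]
            linarith
          have t1 : ‖dbar Φ z * ((μ : ℂ) * V)‖ ≤ ‖dbar Φ z * V‖ := by
            rw [norm_mul, norm_mul, norm_mul, norm_real, Real.norm_of_nonneg hμ0]
            gcongr
            exact mul_le_of_le_one_left (norm_nonneg _) hμ1
          have t2 : ‖(β : ℂ) * (-(z ^ n) * conj' V + V * conj' P) * V‖ ≤ M * (‖z ^ n‖ + ‖P‖) := by
            rw [norm_mul, norm_mul, norm_real, Real.norm_of_nonneg hβ0]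
            have : ‖-(z ^ n) * conj' V + V * conj' P‖ ≤ (‖z ^ n‖ + ‖P‖) * ‖V‖ := by
              refine (norm_add_le _ _).trans (le_of_eq ?_)
              simp; ring
            calc β * ‖-(z ^ n) * conj' V + V * conj' P‖ * ‖V‖
                ≤ β * ((‖z ^ n‖ + ‖P‖) * ‖V‖) * ‖V‖ := by gcongr
              _ = (β * ‖V‖ ^ 2) * (‖z ^ n‖ + ‖P‖) := by ring
              _ ≤ _ := by gcongr
          have t3 : ‖(μ : ℂ) * -(z ^ n)‖ ≤ ‖z ^ n‖ := by
            rw [norm_mul, norm_neg, norm_real, Real.norm_of_nonneg hμ0]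
            exact mul_le_of_le_one_left (norm_nonneg _) hμ1
          calc _ ≤ ‖dbar Φ z * ((μ : ℂ) * V)‖ + ‖Φ z‖ * (‖(β : ℂ) * (-(z ^ n) * conj' V + V * conj' P) * V‖ + ‖(μ : ℂ) * -(z ^ n)‖) := by
                refine (norm_add_le _ _).trans ?_
                rw [norm_mul (Φ z)]
                gcongr
                exact norm_add_le _ _
            _ ≤ ‖dbar Φ z * V‖ + ‖Φ z‖ * (M * (‖z ^ n‖ + ‖P‖) + ‖z ^ n‖) := by gcongr
            _ = ‖dbar Φ z * V‖ + (M + 1) * ‖Φ z * z ^ n‖ + ‖Φ z‖ * M * ‖P‖ := by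
                rw [norm_mul (Φ z)]; ring
            _ ≤ _ := by gcongr; exact hC z
      · have h0 := notMem_tsupport_iff_eventuallyEq.mp hz
        have h1 : Φ z = 0 := h0.self_of_nhds
        have : dbar (X k) z = 0 := by
          rw [(htr k).2.2, (HasW.of_zero h0).dbar_eq, h1]; simp
        rw [this]; simpa using hg0
    · refine Eventually.of_forall fun z => ?_
      by_cases hz : z ∈ tsupport Φ
      · by_cases hW : defect n s z = 0
        · refine tendsto_const_nhds.congr fun k => ?_
          rw [(htr k).2.2]; simp [hL, hW, hm0 0 (by norm_num)]
        · have hpos : 0 < normSq (defect n s z) := normSq_pos.mpr hW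
          have hdW := (hasW_defect (n := n) (hd z (hΦs' hz) hW)).dbar_eq
          refine tendsto_const_nhds.congr' ?_
          have : Tendsto (fun k : ℕ => (k : ℝ) * normSq (defect n s z)) atTop atTop :=
            tendsto_natCast_atTop_atTop.atTop_mul_const hpos
          filter_upwards [this.eventually_gt_atTop 2] with k hk
          rw [(htr k).2.2 z, hdW, hm2 _ hk, hm2' _ hk]
          simp [hL, hW]
          ring
      · have h0 := notMem_tsupport_iff_eventuallyEq.mp hz
        have h1 : Φ z = 0 := h0.self_of_nhds
        refine tendsto_const_nhds.congr fun k => ?_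
        rw [(htr k).2.2, hL]
        simp only
        rw [(HasW.of_zero h0).dbar_eq, h1]; simp
  have hLz : ∫ z, Lf z = 0 := by
    refine tendsto_nhds_unique hlim ?_
    refine tendsto_const_nhds.congr fun k => ?_
    exact (integral_dbar (htr k).1 (htr k).2.1).symm
  -- smooth part
  set R : ℂ → ℂ := fun z => Φ z * (conj' z * z ^ n) with hR
  have hRC : ContDiff ℝ 1 R := by
    have h2 : ContDiff ℝ 1 (fun z : ℂ => conj' z) := contDiff_conj'
    fun_prop
  have hRc : HasCompactSupport R := hΦc.mul_right
  have hRd : ∀ z, dbar R z = dbar Φ z * (conj' z * z ^ n) + Φ z * z ^ n := by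
    intro z
    obtain ⟨a, ha⟩ := hasW_of_differentiableAt (hΦ.differentiable (by norm_num) z)
    have := (ha.mul ((hasW_conj z).mul (hasW_of_hasDerivAt (hasDerivAt_pow n z)))).dbar_eq
    rw [hR, this]; ring
  have hRi : Integrable (dbar R) :=
    (continuous_dbar hRC).integrable_of_hasCompactSupport (hasCompactSupport_dbar hRc)
  have hLi : Integrable Lf := by
    refine i1.sub ?_
    have : (fun z => {z | defect n s z ≠ 0}.indicator (fun z => z ^ n) z * Φ z) =
        {z | defect n s z ≠ 0}.indicator (fun z => Φ z * z ^ n) := by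
      funext z
      by_cases h : defect n s z = 0 <;> simp [h, mul_comm]
    rw [this]
    exact i2.indicator (hWc.measurable (measurableSet_singleton 0).compl)
  have : ∀ z, dbar Φ z * s z + {z | defect n s z = 0}.indicator (fun z => z ^ n) z * Φ z
      = Lf z + dbar R z := by
    intro z
    rw [hRd, hL]
    have : s z = defect n s z + conj' z * z ^ n := by simp [defect]
    by_cases h : defect n s z = 0
    · simp [h, this]; ring
    · simp [h, this]; ring
  simp_rw [this]
  rw [integral_add hLi hRi, hLz, integral_dbar hRC hRc, zero_add]

/-- regularized Cauchy kernel -/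
noncomputable def regK (ε : ℝ) (z : ℂ) : ℂ := conj' z * (((normSq z + ε ^ 2)⁻¹ : ℝ) : ℂ)

/-- its d-bar derivative -/
noncomputable def regk (ε : ℝ) (z : ℂ) : ℝ := ε ^ 2 * ((normSq z + ε ^ 2) ^ 2)⁻¹

lemma reg_pos {ε : ℝ} (hε : 0 < ε) (z : ℂ) : 0 < normSq z + ε ^ 2 := by
  have := normSq_nonneg z
  positivity

lemma contDiff_regK {ε : ℝ} (hε : 0 < ε) : ContDiff ℝ 1 (regK ε) := by
  have h1 : ContDiff ℝ 1 (fun z : ℂ => normSq z) := by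
    have : (fun z : ℂ => normSq z) = fun z => ‖z‖ ^ 2 := by
      funext w; rw [normSq_eq_norm_sq]
    rw [this]
    exact contDiff_norm_sq ℝ
  have h2 : ContDiff ℝ 1 (fun z : ℂ => (normSq z + ε ^ 2)⁻¹) :=
    (h1.add contDiff_const).inv fun z => (reg_pos hε z).ne'
  exact contDiff_conj'.mul (Complex.ofRealCLM.contDiff.comp h2)

lemma hasW_regK {ε : ℝ} (hε : 0 < ε) (z : ℂ) : ∃ a, HasW (regK ε) a (regk ε z : ℝ) z := by
  have hp := reg_pos hε z
  have hm : HasDerivAt (fun t : ℝ => (t + ε ^ 2)⁻¹) (-1 / (normSq z + ε ^ 2) ^ 2) (normSq z) :=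
    ((hasDerivAt_id (normSq z)).add_const (ε ^ 2)).inv hp.ne'
  have h1 := (hasW_of_hasDerivAt (hasDerivAt_id z)).comp_normSq (m := fun t => (t + ε ^ 2)⁻¹) hm
  have h2 := (hasW_conj z).mul h1
  have e : ((regk ε z : ℝ) : ℂ) = 1 * (((normSq (id z) + ε ^ 2)⁻¹ : ℝ) : ℂ) +
      conj' z * (((-1 / (normSq z + ε ^ 2) ^ 2 : ℝ) : ℂ) * (0 * conj' (id z) + id z * conj' 1)) := by
    have hne : (normSq z : ℂ) + (ε : ℂ) ^ 2 ≠ 0 := by exact_mod_cast hp.ne'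
    have hz : conj' z * z = normSq z := by rw [mul_comm, mul_conj]
    simp only [regk, id, map_one, mul_one, zero_mul, zero_add, one_mul]
    push_cast
    field_simp
    linear_combination hz
  rw [e]
  exact ⟨_, h2⟩

lemma continuous_regk {ε : ℝ} (hε : 0 < ε) : Continuous (regk ε) := by
  unfold regk
  refine continuous_const.mul (Continuous.inv₀ ?_ fun z => (pow_pos (reg_pos hε z) 2).ne')
  exact (continuous_normSq.add continuous_const).pow 2

lemma regK_norm_le {ε : ℝ} (hε : 0 < ε) (z : ℂ) : ‖regK ε z‖ ≤ ε⁻¹ := by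
  have hp := reg_pos hε z
  unfold regK
  rw [norm_mul, norm_real, Real.norm_of_nonneg (inv_nonneg.mpr hp.le), ← div_eq_mul_inv,
    div_le_iff₀ hp, normSq_eq_norm_sq]
  simp only [RCLike.norm_conj]
  rw [inv_mul_eq_div, le_div_iff₀ hε]
  nlinarith [sq_nonneg (‖z‖ - ε), norm_nonneg z]

/-- error profile -/
noncomputable def kap (z : ℂ) : ℝ := (‖z‖ * (‖z‖ ^ 2 + 1))⁻¹

lemma integrable_kap : Integrable kap := by
  have := (integrable_fun_norm_addHaar (E := ℂ) (volume : Measure ℂ)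
    (f := fun y : ℝ => (y * (y ^ 2 + 1))⁻¹)).mpr
  apply this
  refine (integrable_inv_one_add_sq.integrableOn (s := Ioi 0)).congr_fun ?_ measurableSet_Ioi
  intro y hy
  have hy : 0 < y := hy
  simp
  field_simp
  ring

lemma kap_nonneg (z : ℂ) : 0 ≤ kap z := by unfold kap; positivity

lemma regK_err {ε : ℝ} (hε : 0 < ε) (z : ℂ) :
    ‖z⁻¹ - regK ε z‖ = ε⁻¹ * kap (ε⁻¹ • z) := by
  by_cases hz : z = 0
  · simp [hz, regK, kap]
  have hp := reg_pos hε z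
  have hn : 0 < ‖z‖ := norm_pos_iff.mpr hz
  have e : z⁻¹ - regK ε z = z⁻¹ * ((ε ^ 2 * (normSq z + ε ^ 2)⁻¹ : ℝ) : ℂ) := by
    have hne : (normSq z : ℂ) + (ε : ℂ) ^ 2 ≠ 0 := by exact_mod_cast hp.ne'
    have hz' : conj' z * z = normSq z := by rw [mul_comm, mul_conj]
    unfold regK
    push_cast
    field_simp
    linear_combination -hz'
  rw [e, norm_mul, norm_inv, norm_real, Real.norm_of_nonneg (by positivity), normSq_eq_norm_sq]
  unfold kap
  rw [norm_smul, norm_inv, Real.norm_of_nonneg hε.le]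
  field_simp

lemma integrable_err {ε : ℝ} (hε : 0 < ε) (z : ℂ) :
    Integrable (fun w => ‖(w - z)⁻¹ - regK ε (w - z)‖) ∧
    ∫ w, ‖(w - z)⁻¹ - regK ε (w - z)‖ = ε * ∫ w, kap w := by
  simp_rw [regK_err hε]
  constructor
  · exact ((integrable_kap.comp_smul (inv_ne_zero hε.ne')).const_mul ε⁻¹).comp_sub_right z
  · rw [integral_sub_right_eq_self (fun w => ε⁻¹ * kap (ε⁻¹ • w)) z, integral_const_mul,
      Measure.integral_comp_smul]
    simp [abs_of_pos hε]
    field_simp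

section cauchy
variable {r : ℂ → ℂ} {C : ℝ}

lemma integrable_mul_regK (hri : Integrable r) {ε : ℝ} (hε : 0 < ε) (z : ℂ) :
    Integrable (fun w => r w * regK ε (w - z)) := by
  refine Integrable.mul_bdd (c := ε⁻¹) hri ?_ (Eventually.of_forall fun w => regK_norm_le hε _)
  exact ((contDiff_regK hε).continuous.comp (continuous_id.sub continuous_const)).aestronglyMeasurable

lemma integrable_mul_err (hri : Integrable r) (hrC : ∀ w, ‖r w‖ ≤ C) {ε : ℝ} (hε : 0 < ε) (z : ℂ) :
    Integrable (fun w => r w * ((w - z)⁻¹ - regK ε (w - z))) := by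
  refine Integrable.bdd_mul (c := C) ?_ hri.aestronglyMeasurable (Eventually.of_forall hrC)
  have h := (integrable_err hε z).1
  refine (integrable_norm_iff ?_).mp h
  have h1 : Measurable fun w : ℂ => (w - z)⁻¹ := (measurable_id.sub_const z).inv
  have h2 : Measurable fun w : ℂ => regK ε (w - z) :=
    ((contDiff_regK hε).continuous.comp (continuous_id.sub continuous_const)).measurable
  exact (h1.sub h2).aestronglyMeasurable

lemma integrable_mul_inv (hri : Integrable r) (hrC : ∀ w, ‖r w‖ ≤ C) (z : ℂ) :
    Integrable (fun w => r w * (w - z)⁻¹) := by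
  refine ((integrable_mul_regK hri one_pos z).add
    (integrable_mul_err hri hrC one_pos z)).congr (Eventually.of_forall fun w => ?_)
  simp only [Pi.add_apply]
  ring

lemma cauchy_err (hri : Integrable r) (hrC : ∀ w, ‖r w‖ ≤ C) {ε : ℝ} (hε : 0 < ε) (z : ℂ) :
    ‖(∫ w, r w * (w - z)⁻¹) - ∫ w, r w * regK ε (w - z)‖ ≤ C * (ε * ∫ w, kap w) := by
  rw [← integral_sub (integrable_mul_inv hri hrC z) (integrable_mul_regK hri hε z),
    ← (integrable_err hε z).2, ← integral_const_mul]
  refine norm_integral_le_of_norm_le ((integrable_err hε z).1.const_mul C)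
    (Eventually.of_forall fun w => ?_)
  rw [← mul_sub, norm_mul]
  gcongr
  exact hrC w

lemma tendsto_cauchy (hri : Integrable r) (hrC : ∀ w, ‖r w‖ ≤ C) :
    TendstoUniformly (fun (j : ℕ) z => ∫ w, r w * regK (1 / ((j : ℝ) + 1)) (w - z))
      (fun z => ∫ w, r w * (w - z)⁻¹) atTop := by
  rw [Metric.tendstoUniformly_iff]
  intro η hη
  have h : Tendsto (fun j : ℕ => C * ((1 / ((j : ℝ) + 1)) * ∫ w, kap w)) atTop (𝓝 0) := by
    have := (tendsto_one_div_add_atTop_nhds_zero_nat (𝕜 := ℝ)).mul_const (∫ w, kap w)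
    simpa using this.const_mul C
  filter_upwards [h.eventually_lt_const hη] with j hj z
  rw [dist_eq_norm]
  exact (cauchy_err hri hrC (by positivity) z).trans_lt hj

lemma continuous_cauchy (hri : Integrable r) (hrC : ∀ w, ‖r w‖ ≤ C) :
    Continuous (fun z => ∫ w, r w * (w - z)⁻¹) := by
  refine (tendsto_cauchy hri hrC).continuous (Eventually.frequently (Eventually.of_forall ?_))
  intro j
  have hε : (0 : ℝ) < 1 / ((j : ℝ) + 1) := by positivity
  set ε := 1 / ((j : ℝ) + 1)
  have hc := (contDiff_regK hε).continuous
  refine continuous_of_dominated (bound := fun w => ‖r w‖ * ε⁻¹) ?_ ?_ (hri.norm.mul_const _) ?_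
  · exact fun z => (integrable_mul_regK hri hε z).aestronglyMeasurable
  · intro z
    refine Eventually.of_forall fun w => ?_
    rw [norm_mul]
    gcongr
    exact regK_norm_le hε _
  · refine Eventually.of_forall fun w => ?_
    exact continuous_const.mul (hc.comp (continuous_const.sub continuous_id))
end cauchy

lemma integrable_regk_one : Integrable (regk 1) := by
  have := (integrable_fun_norm_addHaar (E := ℂ) (volume : Measure ℂ)
    (f := fun y : ℝ => ((y ^ 2 + 1) ^ 2)⁻¹)).mpr
  have e : regk 1 = fun z : ℂ => ((‖z‖ ^ 2 + 1) ^ 2)⁻¹ := by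
    funext z; simp [regk, normSq_eq_norm_sq]
  rw [e]
  apply this
  refine Integrable.mono' (integrable_inv_one_add_sq.integrableOn (s := Ioi 0)) ?_ ?_
  · have : Continuous fun y : ℝ => ((y ^ 2 + 1) ^ 2)⁻¹ :=
      Continuous.inv₀ (by fun_prop) fun y => by positivity
    exact Continuous.aestronglyMeasurable ((continuous_id.pow _).smul this)
  · refine Eventually.of_forall fun y => ?_
    simp only [finrank_real_complex, Nat.add_one_sub_one, pow_one, smul_eq_mul, norm_mul, norm_inv,
      norm_pow, Real.norm_eq_abs]
    have h1 : |y ^ 2 + 1| = y ^ 2 + 1 := abs_of_pos (by positivity)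
    rw [h1, ← div_eq_mul_inv, div_le_iff₀ (by positivity), inv_mul_eq_div, le_div_iff₀ (by positivity)]
    have := abs_nonneg y
    nlinarith [sq_abs y, sq_nonneg (|y| - 1), sq_nonneg (y^2)]

lemma integral_regk_pos : 0 < ∫ z, regk 1 z := by
  have h0 : ∀ z, 0 < regk 1 z := fun z => by
    have := reg_pos one_pos z
    unfold regk; positivity
  rw [integral_pos_iff_support_of_nonneg (fun z => (h0 z).le) integrable_regk_one]
  have : Function.support (regk 1) = univ := by
    ext z; simp [(h0 z).ne']
  rw [this]
  simp

lemma tendsto_approx {h : ℂ → ℂ} (hh : Continuous h) {C : ℝ} (hC : ∀ z, ‖h z‖ ≤ C) (z : ℂ) :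
    Tendsto (fun j : ℕ => ∫ w, h w * (regk (1 / ((j : ℝ) + 1)) (w - z) : ℝ)) atTop
      (𝓝 (h z * ((∫ w, regk 1 w : ℝ) : ℂ))) := by
  have e : ∀ j : ℕ, ∫ w, h w * (regk (1 / ((j : ℝ) + 1)) (w - z) : ℝ) =
      ∫ w, h (z + (1 / ((j : ℝ) + 1)) • w) * (regk 1 w : ℝ) := by
    intro j
    have hε : (0 : ℝ) < 1 / ((j : ℝ) + 1) := by positivity
    set ε := 1 / ((j : ℝ) + 1)
    have e1 : ∫ w, h w * (regk ε (w - z) : ℝ) = ∫ w, h (z + w) * (regk ε w : ℝ) := by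
      rw [← integral_add_left_eq_self (fun w => h w * (regk ε (w - z) : ℝ)) z]
      simp
    have e2 := Measure.integral_comp_smul (volume : Measure ℂ)
      (fun w => h (z + w) * (regk ε w : ℝ)) ε
    have e3 : ∀ w : ℂ, h (z + ε • w) * (regk ε (ε • w) : ℝ) =
        ((ε ^ 2)⁻¹ : ℝ) • (h (z + ε • w) * (regk 1 w : ℝ)) := by
      intro w
      have : regk ε (ε • w) = (ε ^ 2)⁻¹ * regk 1 w := by
        unfold regk
        have h1 : normSq (ε • w) = ε ^ 2 * normSq w := by
          simp [sq]
        have := reg_pos one_pos w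
        rw [h1]
        have h2 : 0 < ε ^ 2 * normSq w + ε ^ 2 := by
          have := normSq_nonneg w
          positivity
        field_simp
      rw [this]
      simp
      ring
    simp_rw [e3] at e2
    rw [integral_smul, finrank_real_complex, abs_of_pos (by positivity)] at e2
    rw [e1]
    exact (smul_right_injective _ (show ((ε ^ 2)⁻¹ : ℝ) ≠ 0 by positivity) e2).symm
  simp_rw [e]
  rw [← integral_complex_ofReal, ← integral_const_mul]
  refine tendsto_integral_of_dominated_convergence (fun w => C * regk 1 w) ?_
    (integrable_regk_one.const_mul C) ?_ ?_
  · intro j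
    have := continuous_regk one_pos
    exact Continuous.aestronglyMeasurable (by fun_prop)
  · intro j
    refine Eventually.of_forall fun w => ?_
    have : 0 ≤ regk 1 w := by unfold regk; positivity
    rw [norm_mul, norm_real, Real.norm_of_nonneg this]
    gcongr
    exact hC _
  · refine Eventually.of_forall fun w => ?_
    refine Tendsto.mul_const _ ?_
    have : Tendsto (fun j : ℕ => z + (1 / ((j : ℝ) + 1)) • w) atTop (𝓝 z) := by
      have := (tendsto_one_div_add_atTop_nhds_zero_nat (𝕜 := ℝ)).smul_const w
      simpa using this.const_add z
    exact (hh.tendsto z).comp this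

lemma dbar_mul_regK {φ : ℂ → ℂ} (hφ : ContDiff ℝ 1 φ) {ε : ℝ} (hε : 0 < ε) (z₀ z : ℂ) :
    dbar (fun w => φ w * regK ε (w - z₀)) z =
      dbar φ z * regK ε (z - z₀) + φ z * (regk ε (z - z₀) : ℝ) := by
  obtain ⟨a, ha⟩ := hasW_of_differentiableAt (hφ.differentiable (by norm_num) z)
  obtain ⟨b, hb⟩ := hasW_regK hε (z - z₀)
  have hb' : HasW (fun w => regK ε (w - z₀)) b (regk ε (z - z₀) : ℝ) z := by
    unfold HasW at *
    have h := HasFDerivAt.comp z hb ((hasFDerivAt_id (𝕜 := ℝ) z).sub_const z₀)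
    rwa [ContinuousLinearMap.comp_id] at h
  exact (ha.mul hb').dbar_eq

lemma cauchy_repr {n : ℕ} {s : ℂ → ℂ} {δ : ℝ} (hs : Continuous s)
    (hd : ∀ z ∈ ball (0 : ℂ) δ, defect n s z ≠ 0 → DifferentiableAt ℂ s z)
    {ρ : ℝ} (hρ : 0 < ρ) (hρδ : ρ < δ) {φ : ℂ → ℂ} (hφ : ContDiff ℝ 1 φ)
    (hφc : HasCompactSupport φ) (hφs : tsupport φ ⊆ closedBall 0 ρ) {R : ℂ → ℂ}
    (hR : ∀ z, R z = dbar φ z * s z + {z | defect n s z = 0}.indicator (fun z => z ^ n) z * φ z)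
    (hRi : Integrable R) {C : ℝ} (hRC : ∀ z, ‖R z‖ ≤ C) (z₀ : ℂ) :
    φ z₀ * s z₀ * ((∫ w, regk 1 w : ℝ) : ℂ) = -∫ w, R w * (w - z₀)⁻¹ := by
  have hcont : Continuous fun w => φ w * s w := hφ.continuous.mul hs
  have hcs : HasCompactSupport fun w => φ w * s w := hφc.mul_right
  obtain ⟨D, hD⟩ := hcont.bounded_above_of_compact_support hcs
  have h1 := tendsto_approx hcont hD z₀
  have h2 := ((tendsto_cauchy hRi hRC).tendsto_at z₀).neg
  refine tendsto_nhds_unique h1 (h2.congr fun j => ?_)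
  have hε : (0 : ℝ) < 1 / ((j : ℝ) + 1) := by positivity
  set ε := 1 / ((j : ℝ) + 1)
  have hw := weak_dbar hs hd hρ hρδ (Φ := fun w => φ w * regK ε (w - z₀))
    (hφ.mul ((contDiff_regK hε).comp (contDiff_id.sub contDiff_const))) hφc.mul_right
    ((closure_mono (fun w hw => left_ne_zero_of_mul hw)).trans hφs)
  have hi : Integrable fun w => φ w * s w * (regk ε (w - z₀) : ℝ) := by
    refine Continuous.integrable_of_hasCompactSupport ?_ hcs.mul_right
    refine hcont.mul (continuous_ofReal.comp ((continuous_regk hε).comp ?_))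
    exact continuous_id.sub continuous_const
  have hi2 := integrable_mul_regK hRi hε z₀
  rw [neg_eq_iff_add_eq_zero, ← integral_add hi2 hi, ← hw]
  refine integral_congr_ae (Eventually.of_forall fun w => ?_)
  simp only
  rw [dbar_mul_regK hφ hε, hR]
  ring

lemma le_of_freq {p : ℂ → ℝ} (hp : Continuous p) (h : ∃ᶠ z in 𝓝[≠] (0 : ℂ), p z ≤ 0) : p 0 ≤ 0 := by
  by_contra hc
  push Not at hc
  have := (hp.continuousAt (x := 0)).eventually_const_lt hc
  have h2 : ∀ᶠ z in 𝓝[≠] (0 : ℂ), 0 < p z := this.filter_mono nhdsWithin_le_nhds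
  obtain ⟨z, h3, h4⟩ := (h.and_eventually h2).exists
  linarith

lemma poly_zero (n : ℕ) : ∀ (b : ℕ → ℂ) (C : ℝ),
    (∃ᶠ z in 𝓝[≠] (0 : ℂ), ‖∑ i ∈ Finset.range n, b i * z ^ i‖ ≤ C * ‖z‖ ^ n) →
    ∀ i < n, b i = 0 := by
  induction n with
  | zero => intro b C _ i hi; omega
  | succ n ih =>
    intro b C h
    have h0 : b 0 = 0 := by
      have := le_of_freq (p := fun z => ‖∑ i ∈ Finset.range (n + 1), b i * z ^ i‖ - C * ‖z‖ ^ (n + 1))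
        (by fun_prop) (h.mono fun z hz => by linarith)
      simp only [Finset.sum_range_succ'] at this
      simpa using this
    have h1 := ih (fun i => b (i + 1)) C (by
      refine (h.and_eventually eventually_mem_nhdsWithin).mono fun z hz => ?_
      obtain ⟨hz, hz0⟩ := hz
      have hpos : 0 < ‖z‖ := norm_pos_iff.mpr hz0
      rw [Finset.sum_range_succ', h0, zero_mul, add_zero] at hz
      have e : ∑ k ∈ Finset.range n, b (k + 1) * z ^ (k + 1) =
          z * ∑ k ∈ Finset.range n, b (k + 1) * z ^ k := by
        rw [Finset.mul_sum]
        exact Finset.sum_congr rfl fun k _ => by ring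
      rw [e, norm_mul] at hz
      refine le_of_mul_le_mul_left ?_ hpos
      calc _ ≤ _ := hz
        _ = _ := by ring)
    intro i hi
    cases i with
    | zero => exact h0
    | succ i => exact h1 i (by omega)

lemma core {n : ℕ} {s : ℂ → ℂ} {δ : ℝ} (hδ : 0 < δ) (hs : Continuous s)
    (hd : ∀ z ∈ ball (0 : ℂ) δ, defect n s z ≠ 0 → DifferentiableAt ℂ s z)
    (hf : ∃ᶠ z in 𝓝[≠] (0 : ℂ), s z = conj' z * z ^ n) :
    ∃ T : ℂ → ℂ, Continuous T ∧ T 0 = 0 ∧ ∀ᶠ z in 𝓝 (0 : ℂ), s z = z ^ n * T z := by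
  have hρ : 0 < δ / 2 := by linarith
  set ρ := δ / 2 with hρdef
  have hρδ : ρ < δ := by linarith
  let b : ContDiffBump (0 : ℂ) := ⟨ρ / 2, ρ, by linarith, by linarith⟩
  set φ : ℂ → ℂ := fun z => ((b z : ℝ) : ℂ) with hφdef
  have hφ : ContDiff ℝ 1 φ := ofRealCLM.contDiff.comp b.contDiff
  have hsub : Function.support φ ⊆ Function.support b := by
    intro z hz; simpa [hφdef] using hz
  have hφs : tsupport φ ⊆ closedBall 0 ρ := by
    have : tsupport φ ⊆ tsupport b := closure_mono hsub
    exact this.trans b.tsupport_eq.subset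
  have hφc : HasCompactSupport φ := b.hasCompactSupport.mono hsub
  have hφ1 : ∀ z ∈ ball (0 : ℂ) (ρ / 2), φ z = 1 := by
    intro z hz
    simp [hφdef, b.one_of_mem_closedBall (ball_subset_closedBall hz)]
  have hdb : ∀ z ∈ ball (0 : ℂ) (ρ / 2), dbar φ z = 0 := by
    intro z hz
    have : φ =ᶠ[𝓝 z] fun _ => 1 := by
      filter_upwards [isOpen_ball.mem_nhds hz] with w hw using hφ1 w hw
    unfold dbar
    rw [this.fderiv_eq]
    simp
  set Z := {z | defect n s z = 0} with hZ
  have hZm : MeasurableSet Z := (continuous_defect (n := n) hs).measurable (measurableSet_singleton 0)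
  set r1 : ℂ → ℂ := fun z => dbar φ z * s z * (z ^ n)⁻¹ with hr1
  have hr1c : Continuous r1 := by
    rw [continuous_iff_continuousAt]
    intro z
    by_cases hz : z = 0
    · have : r1 =ᶠ[𝓝 z] fun _ => 0 := by
        have hz' : z ∈ ball (0 : ℂ) (ρ / 2) := by simp [hz]; linarith
        filter_upwards [isOpen_ball.mem_nhds hz'] with w hw
        simp [hr1, hdb w hw]
      exact continuousAt_const.congr this.symm
    · exact (((continuous_dbar hφ).mul hs).continuousAt).mul
        ((continuousAt_id.pow n).inv₀ (pow_ne_zero n hz))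
  have hr1s : HasCompactSupport r1 := (hasCompactSupport_dbar hφc).mul_right.mul_right
  set r2 : ℂ → ℂ := Z.indicator φ with hr2
  have hφi : Integrable φ := hφ.continuous.integrable_of_hasCompactSupport hφc
  have hr2i : Integrable r2 := hφi.indicator hZm
  obtain ⟨C1, hC1⟩ := hr1c.bounded_above_of_compact_support hr1s
  obtain ⟨C2, hC2⟩ := hφ.continuous.bounded_above_of_compact_support hφc
  set r : ℂ → ℂ := fun z => r1 z + r2 z with hr
  have hri : Integrable r := (hr1c.integrable_of_hasCompactSupport hr1s).add hr2i
  have hrC : ∀ z, ‖r z‖ ≤ C1 + C2 := fun z =>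
    (norm_add_le _ _).trans (add_le_add (hC1 z) ((norm_indicator_le_norm_self _ _).trans (hC2 z)))
  have hrs : ∀ z, z ∉ closedBall (0 : ℂ) ρ → r z = 0 := by
    intro z hz
    have h1 : z ∉ tsupport φ := fun h => hz (hφs h)
    have h2 : φ z = 0 := image_eq_zero_of_notMem_tsupport h1
    have h3 : dbar φ z = 0 := by
      have : φ =ᶠ[𝓝 z] 0 := notMem_tsupport_iff_eventuallyEq.mp h1
      exact (HasW.of_zero this).dbar_eq
    simp [hr, hr1, hr2, h2, h3, indicator]
  -- the moments
  have hmi : ∀ i : ℕ, Integrable fun w => r w * w ^ i := by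
    intro i
    have h1 : Integrable ((closedBall (0 : ℂ) ρ).indicator fun w => w ^ i) := by
      rw [integrable_indicator_iff measurableSet_closedBall]
      exact (continuous_pow i).continuousOn.integrableOn_compact (isCompact_closedBall _ _)
    refine (h1.bdd_mul (c := C1 + C2) hri.aestronglyMeasurable (Eventually.of_forall hrC)).congr
      (Eventually.of_forall fun w => ?_)
    by_cases hw : w ∈ closedBall (0 : ℂ) ρ
    · simp [indicator_of_mem hw]
    · simp [hrs w hw]
  set R : ℂ → ℂ := fun w => r w * w ^ n with hRdef
  have hR : ∀ z, R z = dbar φ z * s z + Z.indicator (fun z => z ^ n) z * φ z := by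
    intro z
    have h1 : r1 z * z ^ n = dbar φ z * s z := by
      by_cases hz : z = 0
      · have hz' : z ∈ ball (0 : ℂ) (ρ / 2) := by simp [hz]; linarith
        simp [hr1, hdb z hz']
      · simp only [hr1]
        field_simp
    have h2 : r2 z * z ^ n = Z.indicator (fun z => z ^ n) z * φ z := by
      by_cases hz : z ∈ Z
      · simp [hr2, hz, mul_comm]
      · simp [hr2, hz]
    simp only [hRdef, hr]
    rw [add_mul, h1, h2]
  have hRi : Integrable R := hmi n
  have hRC : ∀ z, ‖R z‖ ≤ (C1 + C2) * ρ ^ n := by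
    intro z
    have hC : 0 ≤ C1 + C2 := (norm_nonneg _).trans (hrC 0)
    by_cases hz : z ∈ closedBall (0 : ℂ) ρ
    · simp only [hRdef, norm_mul, norm_pow]
      have : ‖z‖ ≤ ρ := by simpa using hz
      have := hrC z
      gcongr
    · simp only [hRdef, hrs z hz, zero_mul, norm_zero]
      positivity
  set c : ℂ := ((∫ w, regk 1 w : ℝ) : ℂ) with hc
  have hc0 : c ≠ 0 := by
    rw [hc]; exact_mod_cast integral_regk_pos.ne'
  have hrep := cauchy_repr hs hd hρ hρδ hφ hφc hφs hR hRi hRC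
  set T₀ : ℂ → ℂ := fun z => ∫ w, r w * (w - z)⁻¹ with hT₀
  have hTc : Continuous T₀ := continuous_cauchy hri hrC
  set a : ℕ → ℂ := fun i => ∫ w, r w * w ^ (n - 1 - i) with ha
  have hsplit : ∀ z, ∫ w, R w * (w - z)⁻¹ =
      z ^ n * T₀ z + ∑ i ∈ Finset.range n, a i * z ^ i := by
    intro z
    have e : ∀ᵐ w : ℂ, R w * (w - z)⁻¹ = z ^ n * (r w * (w - z)⁻¹) +
        ∑ i ∈ Finset.range n, r w * w ^ (n - 1 - i) * z ^ i := by
      have : ∀ᵐ w : ℂ, w ≠ z := by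
        simp [ae_iff, measure_singleton]
      filter_upwards [this] with w hw
      have hne : w - z ≠ 0 := sub_ne_zero.mpr hw
      have hg := geom_sum₂_mul z w n
      have e2 : ∑ i ∈ Finset.range n, r w * w ^ (n - 1 - i) * z ^ i =
          r w * ∑ i ∈ Finset.range n, z ^ i * w ^ (n - 1 - i) := by
        rw [Finset.mul_sum]
        exact Finset.sum_congr rfl fun k _ => by ring
      rw [e2]
      simp only [hRdef]
      field_simp
      linear_combination r w * hg
    rw [integral_congr_ae e, integral_add, integral_const_mul, integral_finsetSum]
    · congr 1
      exact Finset.sum_congr rfl fun k _ => by rw [integral_mul_const]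
    · exact fun i _ => (hmi _).mul_const _
    · exact (integrable_mul_inv hri hrC z).const_mul _
    · exact integrable_finsetSum _ fun i _ => (hmi _).mul_const _
  have hnear : ∀ z ∈ ball (0 : ℂ) (ρ / 2), s z * c =
      -(z ^ n * T₀ z) - ∑ i ∈ Finset.range n, a i * z ^ i := by
    intro z hz
    have := hrep z
    rw [hφ1 z hz, hsplit z, one_mul] at this
    rw [this]; ring
  have hball : ball (0 : ℂ) (ρ / 2) ∈ 𝓝 (0 : ℂ) := ball_mem_nhds _ (by linarith)
  have ha0 : ∀ i < n, a i = 0 := by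
    have hTb : ∀ᶠ z in 𝓝 (0 : ℂ), ‖T₀ z‖ < ‖T₀ 0‖ + 1 :=
      hTc.norm.continuousAt.eventually_lt_const (by linarith)
    refine poly_zero n a (ρ / 2 * ‖c‖ + (‖T₀ 0‖ + 1)) ?_
    have hev : ∀ᶠ z in 𝓝[≠] (0 : ℂ), z ∈ ball (0 : ℂ) (ρ / 2) ∧ ‖T₀ z‖ < ‖T₀ 0‖ + 1 :=
      (Filter.Eventually.and hball hTb).filter_mono nhdsWithin_le_nhds
    refine (hf.and_eventually hev).mono fun z hz => ?_
    obtain ⟨h1, h2, h3⟩ := hz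
    have h4 := hnear z h2
    have h5 : ∑ i ∈ Finset.range n, a i * z ^ i = z ^ n * (-(conj' z * c) - T₀ z) := by
      rw [h1] at h4
      linear_combination h4
    have h6 : ‖z‖ ≤ ρ / 2 := by
      have : ‖z‖ < ρ / 2 := by simpa using h2
      exact this.le
    rw [h5, norm_mul, norm_pow, mul_comm]
    refine mul_le_mul_of_nonneg_right ?_ (by positivity)
    refine (norm_sub_le _ _).trans ?_
    rw [norm_neg, norm_mul, RCLike.norm_conj]
    gcongr
  have hnear' : ∀ z ∈ ball (0 : ℂ) (ρ / 2), s z = z ^ n * (-T₀ z / c) := by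
    intro z hz
    have h := hnear z hz
    rw [Finset.sum_eq_zero (fun i hi => by rw [ha0 i (Finset.mem_range.mp hi), zero_mul])] at h
    field_simp
    linear_combination h
  refine ⟨fun z => -T₀ z / c, by fun_prop, ?_, ?_⟩
  · have hcj : Continuous fun z : ℂ => conj' z := continuous_conj
    have := le_of_freq (p := fun z => ‖-T₀ z / c - conj' z‖) (by fun_prop) (by
      have hev : ∀ᶠ z in 𝓝[≠] (0 : ℂ), z ∈ ball (0 : ℂ) (ρ / 2) :=
        Filter.Eventually.filter_mono nhdsWithin_le_nhds hball
      refine ((hf.and_eventually hev).and_eventually eventually_mem_nhdsWithin).mono fun z hz => ?_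
      obtain ⟨⟨h1, h2⟩, h3⟩ := hz
      have h4 := hnear' z h2
      rw [h1, mul_comm] at h4
      have h5 := mul_left_cancel₀ (pow_ne_zero n h3) h4
      rw [← h5]; simp)
    have h7 := norm_le_zero_iff.mp this
    simpa using h7
  · filter_upwards [hball] with z hz using hnear' z hz

/-- If `S(ζ) = conj ζ · F(ζ)` on `Γ` with `F` holomorphic near `0`, then
`f = S/F` (with `f(0) = 0`) is a Schwarz function of `Ω ∪ Γ` near `0`. -/
theorem stmt_15 (r : ℝ) (hr : 0 < r) (Ω : Set ℂ) (hΩopen : IsOpen Ω)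
    (hΩsub : Ω ⊆ Metric.ball (0 : ℂ) r)
    (h0 : (0 : ℂ) ∈ frontier Ω)
    (hacc : (0 : ℂ) ∈ closure ((frontier Ω ∩ Metric.ball (0 : ℂ) r) \ {0}))
    (F S : ℂ → ℂ) (V : Set ℂ) (hV : V ∈ nhds (0 : ℂ))
    (hFhol : DifferentiableOn ℂ F V)
    (hFnz : ∃ δ₀ > (0 : ℝ), ∀ z ∈ Metric.closedBall (0 : ℂ) δ₀ \ {0}, F z ≠ 0)
    (hShol : DifferentiableOn ℂ S Ω)
    (hScont : ContinuousOn S (Ω ∪ (frontier Ω ∩ Metric.ball (0 : ℂ) r)))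
    (hSbdd : ∃ M : ℝ, ∀ z ∈ Ω ∪ (frontier Ω ∩ Metric.ball (0 : ℂ) r), ‖S z‖ ≤ M)
    (hSbdry : ∀ ζ ∈ frontier Ω ∩ Metric.ball (0 : ℂ) r, S ζ = conj' ζ * F ζ) :
    ∃ δ > (0 : ℝ),
      (∀ z ∈ Metric.closedBall (0 : ℂ) δ \ {0}, F z ≠ 0) ∧
      DifferentiableOn ℂ (fun z => if z = 0 then 0 else S z / F z)
        (Ω ∩ Metric.ball (0 : ℂ) δ) ∧
      ContinuousOn (fun z => if z = 0 then 0 else S z / F z)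
        ((Ω ∪ (frontier Ω ∩ Metric.ball (0 : ℂ) r)) ∩ Metric.ball (0 : ℂ) δ) ∧
      ∀ ζ ∈ (frontier Ω ∩ Metric.ball (0 : ℂ) r) ∩ Metric.ball (0 : ℂ) δ,
        (if ζ = 0 then 0 else S ζ / F ζ) = conj' ζ := by
  have hFan : AnalyticAt ℂ F 0 := hFhol.analyticAt hV
  obtain ⟨δ₀, hδ₀, hnz⟩ := hFnz
  have hnot : ¬ ∀ᶠ z in 𝓝 (0 : ℂ), F z = 0 := by
    intro h
    have h1 : ∀ᶠ z in 𝓝[≠] (0 : ℂ), F z = 0 ∧ z ∈ closedBall (0 : ℂ) δ₀ :=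
      (h.and (closedBall_mem_nhds _ hδ₀)).filter_mono nhdsWithin_le_nhds
    obtain ⟨z, ⟨h2, h3⟩, h4⟩ := (h1.and eventually_mem_nhdsWithin).exists
    exact hnz z ⟨h3, h4⟩ h2
  obtain ⟨n, g, hgan, hg0, hFg⟩ := hFan.exists_eventuallyEq_pow_smul_nonzero_iff.mpr hnot
  have hev : ∀ᶠ z in 𝓝 (0 : ℂ), DifferentiableAt ℂ g z ∧ g z ≠ 0 ∧ F z = z ^ n * g z ∧
      DifferentiableAt ℂ F z := by
    filter_upwards [hgan.eventually_analyticAt, hgan.continuousAt.eventually_ne hg0, hFg,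
      hFan.eventually_analyticAt] with z h1 h2 h3 h4
    exact ⟨h1.differentiableAt, h2, by simpa using h3, h4.differentiableAt⟩
  obtain ⟨δ', hδ', hball⟩ := Metric.eventually_nhds_iff_ball.mp hev
  set δ := min (δ' / 2) (min (r / 2) δ₀) with hδdef
  have hδ : 0 < δ := by positivity
  have hd1 : δ < δ' := (min_le_left _ _).trans_lt (by linarith)
  have hd2 : δ < r := ((min_le_right _ _).trans (min_le_left _ _)).trans_lt (by linarith)
  have hd3 : δ ≤ δ₀ := (min_le_right _ _).trans (min_le_right _ _)
  clear_value δ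
  set K := closedBall (0 : ℂ) δ with hK
  have hgK : ∀ z ∈ K, DifferentiableAt ℂ g z ∧ g z ≠ 0 ∧ F z = z ^ n * g z ∧
      DifferentiableAt ℂ F z := fun z hz => hball z (closedBall_subset_ball hd1 hz)
  have hKr : K ⊆ ball (0 : ℂ) r := closedBall_subset_ball hd2
  have hFK : ∀ z ∈ K \ {0}, F z ≠ 0 := fun z hz =>
    hnz z ⟨closedBall_subset_closedBall hd3 hz.1, hz.2⟩
  have h0Ω : (0 : ℂ) ∉ Ω := by
    rw [hΩopen.frontier_eq] at h0
    exact h0.2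
  set G := Ω ∪ (frontier Ω ∩ ball (0 : ℂ) r) with hG
  have hcl : K ∩ closure Ω ⊆ G := by
    rintro z ⟨hz, hz2⟩
    by_cases h : z ∈ Ω
    · exact Or.inl h
    · refine Or.inr ⟨?_, hKr hz⟩
      rw [hΩopen.frontier_eq]
      exact ⟨hz2, h⟩
  classical
  set s₀ : ℂ → ℂ := fun z => if z ∈ Ω then S z / g z else conj' z * z ^ n with hs₀
  have hs₀G : ∀ z ∈ K, z ∈ G → s₀ z = S z / g z := by
    intro z hz hzG
    by_cases h : z ∈ Ω
    · simp [hs₀, h]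
    · have h1 := hzG.resolve_left h
      simp only [hs₀, h, if_false]
      obtain ⟨-, hg, hF, -⟩ := hgK z hz
      rw [hSbdry z h1, hF]
      field_simp
  have hcj : Continuous fun z : ℂ => conj' z := continuous_conj
  have hs₀c : ContinuousOn s₀ K := by
    have hu : K = (K ∩ closure Ω) ∪ (K ∩ Ωᶜ) := by
      rw [← inter_union_distrib_left]
      refine (inter_eq_left.mpr fun z _ => ?_).symm
      by_cases h : z ∈ Ω
      · exact Or.inl (subset_closure h)
      · exact Or.inr h
    rw [hu]
    refine ContinuousOn.union_of_isClosed ?_ ?_ (isClosed_closedBall.inter isClosed_closure)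
      (isClosed_closedBall.inter hΩopen.isClosed_compl)
    · have : ContinuousOn (fun z => S z / g z) (K ∩ closure Ω) :=
        (hScont.mono hcl).div
          (fun z hz => (hgK z hz.1).1.continuousAt.continuousWithinAt)
          (fun z hz => (hgK z hz.1).2.1)
      exact this.congr fun z hz => hs₀G z hz.1 (hcl hz)
    · have : ContinuousOn (fun z : ℂ => conj' z * z ^ n) (K ∩ Ωᶜ) :=
        (hcj.mul (continuous_pow n)).continuousOn
      refine this.congr fun z hz => ?_
      have h : z ∉ Ω := hz.2
      simp [hs₀, h]
  obtain ⟨s, hsK⟩ := ContinuousMap.exists_restrict_eq (s := K) isClosed_closedBall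
    ⟨K.restrict s₀, hs₀c.restrict⟩
  have hss : ∀ z ∈ K, s z = s₀ z := by
    intro z hz
    exact congrArg (fun f => f ⟨z, hz⟩) hsK
  have hbK : ball (0 : ℂ) δ ⊆ K := ball_subset_closedBall
  have hfr : ∃ᶠ z in 𝓝[≠] (0 : ℂ), z ∈ frontier Ω ∩ ball (0 : ℂ) r := by
    rw [frequently_nhdsWithin_iff]
    exact mem_closure_iff_frequently.mp hacc
  obtain ⟨T, hTc, hT0, hT⟩ := core (n := n) (s := s) hδ s.continuous (by
      intro z hz hW
      have hzΩ : z ∈ Ω := by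
        by_contra h
        apply hW
        simp [defect, hss z (hbK hz), hs₀, h]
      have he : (s : ℂ → ℂ) =ᶠ[𝓝 z] fun w => S w / g w := by
        filter_upwards [isOpen_ball.mem_nhds hz, hΩopen.mem_nhds hzΩ] with w h1 h2
        rw [hss w (hbK h1), hs₀G w (hbK h1) (Or.inl h2)]
      obtain ⟨hg, hg', -⟩ := hgK z (hbK hz)
      exact ((hShol.differentiableAt (hΩopen.mem_nhds hzΩ)).div hg hg').congr_of_eventuallyEq he)
    (by
      have h1 : ∀ᶠ z in 𝓝[≠] (0 : ℂ), z ∈ ball (0 : ℂ) δ :=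
        Filter.Eventually.filter_mono nhdsWithin_le_nhds (ball_mem_nhds _ hδ)
      refine (hfr.and_eventually h1).mono fun z hz => ?_
      have h : z ∉ Ω := by
        have := hz.1.1
        rw [hΩopen.frontier_eq] at this
        exact this.2
      rw [hss z (hbK hz.2)]
      simp [hs₀, h])
  refine ⟨δ, hδ, hFK, ?_, ?_, ?_⟩
  · rintro z ⟨hz, hzb⟩
    have hz0 : z ≠ 0 := fun h => h0Ω (h ▸ hz)
    have he : (fun z => if z = 0 then 0 else S z / F z) =ᶠ[𝓝 z] fun w => S w / F w := by
      filter_upwards [isOpen_ne.mem_nhds hz0] with w hw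
      exact if_neg hw
    exact (((hShol.differentiableAt (hΩopen.mem_nhds hz)).div (hgK z (hbK hzb)).2.2.2
      (hFK z ⟨hbK hzb, hz0⟩)).congr_of_eventuallyEq he).differentiableWithinAt
  · rintro z ⟨hz, hzb⟩
    by_cases hz0 : z = 0
    · subst hz0
      refine hTc.continuousWithinAt.congr_of_eventuallyEq ?_ (by simp [hT0])
      filter_upwards [eventually_mem_nhdsWithin, hT.filter_mono nhdsWithin_le_nhds] with w hw hw2
      by_cases hw0 : w = 0
      · simp [hw0, hT0]
      · obtain ⟨-, hg, hF, -⟩ := hgK w (hbK hw.2)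
        rw [if_neg hw0, hF]
        rw [hss w (hbK hw.2), hs₀G w (hbK hw.2) hw.1] at hw2
        have hp := pow_ne_zero n hw0
        rw [div_eq_iff hg] at hw2
        rw [div_eq_iff (mul_ne_zero hp hg), hw2]
        ring
    · have he : (fun z => if z = 0 then 0 else S z / F z) =ᶠ[𝓝[G ∩ ball (0 : ℂ) δ] z]
          fun w => S w / F w := by
        filter_upwards [mem_nhdsWithin_of_mem_nhds (isOpen_ne.mem_nhds hz0)] with w hw
        exact if_neg hw
      refine ContinuousWithinAt.congr_of_eventuallyEq ?_ he (if_neg hz0)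
      exact ((hScont z hz).mono inter_subset_left).div
        (hgK z (hbK hzb)).2.2.2.continuousAt.continuousWithinAt (hFK z ⟨hbK hzb, hz0⟩)
  · rintro z ⟨hz, hzb⟩
    by_cases hz0 : z = 0
    · simp [hz0]
    · rw [if_neg hz0, hSbdry z hz]
      exact mul_div_cancel_right₀ _ (hFK z ⟨hbK hzb, hz0⟩)
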